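/- Let α>1, L>0, let F:ℝ→ℝ be smooth with ‖F'‖_{α,L} (Gevrey-(α,L) norm of F' on [−1,1]) finite, let K⊂ℝ^m be a compact box, 𝑳∈(0,∞)^m, and let q,Δq:ℝ^m→ℝ be smooth functions such that for every t∈[0,1] the function q+tΔq takes values in [−1,1] on K and has Gevrey-(α,𝑳) norm on K at most L^α/m^{α−1}. Then ‖F∘(q+Δq) − F∘q‖_{α,𝑳} ≤ ‖F'‖_{α,L} · ‖Δq‖_{α,𝑳}. -/

import Mathlib

/-!
For fixed multi-index `k`, point `x` and parameter `t`, the `t`-derivative of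
`∂^k (F ∘ (q + tΔq)) (x)` is `∂^k ((F' ∘ (q + tΔq)) · Δq) (x)`. Given finitely many multi-indices,
choose points where the suprema in the Gevrey norm of `F ∘ (q + Δq) - F ∘ q` are attained, and sum
the derivatives with the signs that make each term nonnegative. The mean value theorem for this
single scalar function of `t` bounds the partial sum of the norm by
`‖(F' ∘ (q + tΔq)) · Δq‖` for some `t ∈ (0,1)`. Two facts about the Gevrey norm then conclude.

* Algebra property: `‖φψ‖ ≤ ‖φ‖ ‖ψ‖` (`gevreyTerm_mul_le`, `hasSum_coeff_mul`).
* Composition: `‖f ∘ g‖ ≤ ‖f‖` whenever `g` maps `K` to `[-1,1]` and `‖g‖ ≤ L^α / m^(α-1)`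
  (`sum_gevreyTerm_comp_le`).

Both are proved through formal Taylor series. The series `jet x φ = ∑ ∂^kφ(x)/k! X^k` is
multiplicative in `φ` (`jet_mul`), and the one of `f ∘ g` is the composite of the Taylor series of
`f` and `g` (`coeff_jet_comp`, a form of Faà di Bruno's formula); both identities follow by
induction on the multi-index, comparing formal partial derivatives. In the Gevrey norm the `k`-th
Taylor coefficient carries the weight `(𝑳^k)^α (k!)^(1-α)`. Hence the product estimate reduces to
`a! b! ≤ (a+b)!`, and the composition estimate to
`n! l₁! ⋯ l_n! ≤ m^n (l₁ + ⋯ + l_n)!` for nonzero multi-indices `l_i`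
(`factorial_mul_prod_factorial_le`), which produces the factor `m^(n(α-1)) / n!^(α-1)` needed to
turn `‖g‖^n / n!` into at most `(L^n / n!)^α`.
-/

open scoped BigOperators

noncomputable section

/-- Partial derivative in the `j`-th coordinate direction. -/
def pd {E : Type*} [NormedAddCommGroup E] [NormedSpace ℝ E] {n : ℕ}
    (j : Fin n) (φ : (Fin n → ℝ) → E) : (Fin n → ℝ) → E :=
  fun x => fderiv ℝ φ x (Pi.single j 1)

/-- Mixed partial derivative `∂^k`. -/
def mpd {E : Type*} [NormedAddCommGroup E] [NormedSpace ℝ E] {n : ℕ}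
    (k : Fin n → ℕ) (φ : (Fin n → ℝ) → E) : (Fin n → ℝ) → E :=
  (List.finRange n).foldr (fun j ψ => (pd j)^[k j] ψ) φ

/-- Sup (C⁰) norm of `ψ` on `K`. -/
def supOn {E : Type*} [NormedAddCommGroup E] {n : ℕ}
    (K : Set (Fin n → ℝ)) (ψ : (Fin n → ℝ) → E) : ℝ :=
  sSup ((fun x => ‖ψ x‖) '' K)

/-- The `k`-th term of the Gevrey-(α,𝑳) norm of `φ` on `K`. -/
def gevreyTerm {E : Type*} [NormedAddCommGroup E] [NormedSpace ℝ E] {n : ℕ}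
    (α : ℝ) (L : Fin n → ℝ) (K : Set (Fin n → ℝ))
    (φ : (Fin n → ℝ) → E) (k : Fin n → ℕ) : ℝ :=
  ((∏ j, L j ^ k j) / ∏ j, (Nat.factorial (k j) : ℝ)) ^ α * supOn K (mpd k φ)

/-- The `k`-th term of the Gevrey-(α,L) norm of a one-variable function on `[-1,1]`. -/
def gevrey1Term (α L : ℝ) (g : ℝ → ℝ) (k : ℕ) : ℝ :=
  (L ^ k / (Nat.factorial k : ℝ)) ^ α *
    sSup ((fun t => |iteratedDeriv k g t|) '' Set.Icc (-1 : ℝ) 1)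

open Finset MvPowerSeries

/-! ### Mixed partial derivatives -/

theorem dirDeriv_contDiff {V : Type*} [NormedAddCommGroup V] [NormedSpace ℝ V]
    {φ : V → ℝ} (hφ : ContDiff ℝ (⊤ : ℕ∞) φ) (v : V) :
    ContDiff ℝ (⊤ : ℕ∞) (fun x => fderiv ℝ φ x v) :=
  (hφ.fderiv_right (m := (⊤ : ℕ∞)) (by simp)).clm_apply contDiff_const

theorem dirDeriv_comm {V : Type*} [NormedAddCommGroup V] [NormedSpace ℝ V]
    {φ : V → ℝ} (hφ : ContDiff ℝ (⊤ : ℕ∞) φ) (v w : V) (x : V) :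
    fderiv ℝ (fun y => fderiv ℝ φ y v) x w = fderiv ℝ (fun y => fderiv ℝ φ y w) x v := by
  have hd : DifferentiableAt ℝ (fderiv ℝ φ) x :=
    (hφ.fderiv_right (m := (⊤ : ℕ∞)) (by simp)).differentiable (by simp) x
  have key : ∀ u : V, fderiv ℝ (fun y => fderiv ℝ φ y u) x =
      (fderiv ℝ (fderiv ℝ φ) x).flip u := by
    intro u
    rw [fderiv_clm_apply hd (differentiableAt_const u)]
    ext z
    simp
  rw [key, key]
  have hs : IsSymmSndFDerivAt ℝ φ x :=
    hφ.contDiffAt.isSymmSndFDerivAt (by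
      rw [minSmoothness_of_isRCLikeNormedField]; exact WithTop.coe_le_coe.2 (le_top : (2 : ℕ∞) ≤ ⊤))
  exact hs.eq w v

section Calculus

variable {m : ℕ}

theorem pd_contDiff {φ : (Fin m → ℝ) → ℝ} (hφ : ContDiff ℝ (⊤ : ℕ∞) φ) (j : Fin m) :
    ContDiff ℝ (⊤ : ℕ∞) (pd j φ) :=
  dirDeriv_contDiff hφ _

theorem pd_comm {φ : (Fin m → ℝ) → ℝ} (hφ : ContDiff ℝ (⊤ : ℕ∞) φ) (i j : Fin m) :
    pd i (pd j φ) = pd j (pd i φ) :=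
  funext fun x => dirDeriv_comm hφ _ _ x

theorem pd_iterate_contDiff (j : Fin m) (n : ℕ) {φ : (Fin m → ℝ) → ℝ}
    (hφ : ContDiff ℝ (⊤ : ℕ∞) φ) : ContDiff ℝ (⊤ : ℕ∞) ((pd j)^[n] φ) := by
  induction n with
  | zero => exact hφ
  | succ n ih => rw [Function.iterate_succ_apply']; exact pd_contDiff ih j

theorem pd_iterate_comm (i j : Fin m) (n : ℕ) {φ : (Fin m → ℝ) → ℝ}
    (hφ : ContDiff ℝ (⊤ : ℕ∞) φ) : (pd i)^[n] (pd j φ) = pd j ((pd i)^[n] φ) := by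
  induction n with
  | zero => rfl
  | succ n ih =>
    rw [Function.iterate_succ_apply', Function.iterate_succ_apply', ih,
      pd_comm (pd_iterate_contDiff i n hφ)]

theorem foldr_pd_contDiff (k : Fin m → ℕ) (l : List (Fin m)) {φ : (Fin m → ℝ) → ℝ}
    (hφ : ContDiff ℝ (⊤ : ℕ∞) φ) :
    ContDiff ℝ (⊤ : ℕ∞) (l.foldr (fun j ψ => (pd j)^[k j] ψ) φ) := by
  induction l with
  | nil => exact hφ
  | cons i l ih => exact pd_iterate_contDiff i _ ih

theorem foldr_pd_comm (k : Fin m → ℕ) (l : List (Fin m)) (j : Fin m) {φ : (Fin m → ℝ) → ℝ}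
    (hφ : ContDiff ℝ (⊤ : ℕ∞) φ) :
    l.foldr (fun j ψ => (pd j)^[k j] ψ) (pd j φ) =
      pd j (l.foldr (fun j ψ => (pd j)^[k j] ψ) φ) := by
  induction l with
  | nil => rfl
  | cons i l ih =>
    simp only [List.foldr_cons, ih]
    exact pd_iterate_comm i j _ (foldr_pd_contDiff k l hφ)

theorem foldr_pd_congr {k k' : Fin m → ℕ} {l : List (Fin m)} (h : ∀ i ∈ l, k i = k' i)
    (φ : (Fin m → ℝ) → ℝ) :
    l.foldr (fun j ψ => (pd j)^[k j] ψ) φ = l.foldr (fun j ψ => (pd j)^[k' j] ψ) φ := by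
  induction l with
  | nil => rfl
  | cons i l ih =>
    simp only [List.foldr_cons]
    rw [ih fun i hi => h i (List.mem_cons_of_mem _ hi), h i List.mem_cons_self]

/-- Raising one order of differentiation amounts to differentiating once more at the start, wherever
`j` sits in the list of coordinates. -/
theorem foldr_pd_add_single (k : Fin m → ℕ) (j : Fin m) {l : List (Fin m)} (hl : l.Nodup)
    (hj : j ∈ l) {φ : (Fin m → ℝ) → ℝ} (hφ : ContDiff ℝ (⊤ : ℕ∞) φ) :
    l.foldr (fun i ψ => (pd i)^[(k + Pi.single j 1 : Fin m → ℕ) i] ψ) φ =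
      l.foldr (fun j ψ => (pd j)^[k j] ψ) (pd j φ) := by
  induction l with
  | nil => simp at hj
  | cons i l ih =>
    rw [List.nodup_cons] at hl
    rw [List.foldr_cons, List.foldr_cons]
    by_cases hij : i = j
    · subst hij
      rw [foldr_pd_congr (k' := k), foldr_pd_comm k l i hφ]
      · simp [Function.iterate_succ_apply]
      · intro i' hi'
        have : i' ≠ i := fun h => hl.1 (h ▸ hi')
        simp [this]
    · have hjl : j ∈ l := (List.mem_cons.1 hj).resolve_left (Ne.symm hij)
      rw [ih hl.2 hjl]
      simp [hij]

theorem mpd_contDiff (k : Fin m → ℕ) {φ : (Fin m → ℝ) → ℝ} (hφ : ContDiff ℝ (⊤ : ℕ∞) φ) :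
    ContDiff ℝ (⊤ : ℕ∞) (mpd k φ) :=
  foldr_pd_contDiff k _ hφ

theorem mpd_zero (φ : (Fin m → ℝ) → ℝ) : mpd (0 : Fin m → ℕ) φ = φ := by
  unfold mpd
  induction List.finRange m with
  | nil => rfl
  | cons i l ih => simp only [List.foldr_cons, ih]; rfl

theorem mpd_add_single (k : Fin m →₀ ℕ) (j : Fin m) {φ : (Fin m → ℝ) → ℝ}
    (hφ : ContDiff ℝ (⊤ : ℕ∞) φ) :
    mpd (k + Finsupp.single j 1 : Fin m →₀ ℕ) φ = mpd k (pd j φ) := by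
  rw [Finsupp.coe_add, Finsupp.single_eq_pi_single]
  exact foldr_pd_add_single k j (List.nodup_finRange m) (List.mem_finRange j) hφ

theorem multiIndex_induction {P : (Fin m →₀ ℕ) → Prop} (zero : P 0)
    (step : ∀ k j, P k → P (k + Finsupp.single j 1)) (k : Fin m →₀ ℕ) : P k := by
  have key : ∀ (j : Fin m) (n : ℕ) (k : Fin m →₀ ℕ), P k → P (k + Finsupp.single j n) := by
    intro j n
    induction n with
    | zero => intro k hk; simpa using hk
    | succ n ih =>
      intro k hk
      rw [Finsupp.single_add, ← add_assoc]
      exact step _ _ (ih k hk)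
  induction k using Finsupp.induction with
  | zero => exact zero
  | single_add j n f _ _ ih => rw [add_comm]; exact key j n f ih

theorem pd_add {φ ψ : (Fin m → ℝ) → ℝ} (hφ : ContDiff ℝ (⊤ : ℕ∞) φ)
    (hψ : ContDiff ℝ (⊤ : ℕ∞) ψ) (j : Fin m) :
    pd j (fun x => φ x + ψ x) = fun x => pd j φ x + pd j ψ x := by
  funext x
  simp only [pd]
  rw [fderiv_fun_add (hφ.differentiable (by simp) x) (hψ.differentiable (by simp) x)]
  rfl

theorem pd_sub {φ ψ : (Fin m → ℝ) → ℝ} (hφ : ContDiff ℝ (⊤ : ℕ∞) φ)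
    (hψ : ContDiff ℝ (⊤ : ℕ∞) ψ) (j : Fin m) :
    pd j (fun x => φ x - ψ x) = fun x => pd j φ x - pd j ψ x := by
  funext x
  simp only [pd]
  rw [fderiv_fun_sub (hφ.differentiable (by simp) x) (hψ.differentiable (by simp) x)]
  rfl

theorem pd_mul {φ ψ : (Fin m → ℝ) → ℝ} (hφ : ContDiff ℝ (⊤ : ℕ∞) φ)
    (hψ : ContDiff ℝ (⊤ : ℕ∞) ψ) (j : Fin m) :
    pd j (fun x => φ x * ψ x) = fun x => φ x * pd j ψ x + pd j φ x * ψ x := by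
  funext x
  simp only [pd]
  rw [fderiv_fun_mul (hφ.differentiable (by simp) x) (hψ.differentiable (by simp) x)]
  simp [mul_comm]

theorem pd_comp {f : ℝ → ℝ} {φ : (Fin m → ℝ) → ℝ} (hf : ContDiff ℝ (⊤ : ℕ∞) f)
    (hφ : ContDiff ℝ (⊤ : ℕ∞) φ) (j : Fin m) :
    pd j (fun x => f (φ x)) = fun x => deriv f (φ x) * pd j φ x := by
  funext x
  have h := ((hf.differentiable (by simp) (φ x)).hasDerivAt.comp_hasFDerivAt x
    (hφ.differentiable (by simp) x).hasFDerivAt).fderiv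
  simp only [pd]
  change fderiv ℝ (f ∘ φ) x _ = _
  rw [h]
  simp

theorem mpd_add (k : Fin m →₀ ℕ) : ∀ {φ ψ : (Fin m → ℝ) → ℝ}, ContDiff ℝ (⊤ : ℕ∞) φ →
    ContDiff ℝ (⊤ : ℕ∞) ψ → mpd k (fun x => φ x + ψ x) = fun x => mpd k φ x + mpd k ψ x := by
  induction k using multiIndex_induction with
  | zero => intro φ ψ _ _; simp [mpd_zero]
  | step k j ih =>
    intro φ ψ hφ hψ
    rw [mpd_add_single k j (hφ.add hψ), pd_add hφ hψ, ih (pd_contDiff hφ j) (pd_contDiff hψ j),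
      mpd_add_single k j hφ, mpd_add_single k j hψ]

theorem mpd_sub (k : Fin m →₀ ℕ) : ∀ {φ ψ : (Fin m → ℝ) → ℝ}, ContDiff ℝ (⊤ : ℕ∞) φ →
    ContDiff ℝ (⊤ : ℕ∞) ψ → mpd k (fun x => φ x - ψ x) = fun x => mpd k φ x - mpd k ψ x := by
  induction k using multiIndex_induction with
  | zero => intro φ ψ _ _; simp [mpd_zero]
  | step k j ih =>
    intro φ ψ hφ hψ
    rw [mpd_add_single k j (hφ.sub hψ), pd_sub hφ hψ, ih (pd_contDiff hφ j) (pd_contDiff hψ j),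
      mpd_add_single k j hφ, mpd_add_single k j hψ]

/-- A parameter derivative may be exchanged with a mixed partial derivative in the space
variables, for a function smooth in all variables jointly. -/
theorem mpd_param_hasDerivAt (k : Fin m →₀ ℕ) : ∀ {Φ : ℝ × (Fin m → ℝ) → ℝ},
    ContDiff ℝ (⊤ : ℕ∞) Φ → ∀ (x : Fin m → ℝ) (t : ℝ),
    HasDerivAt (fun t => mpd k (fun y => Φ (t, y)) x)
      (mpd k (fun y => fderiv ℝ Φ (t, y) (1, 0)) x) t := by
  induction k using multiIndex_induction with
  | zero =>
    intro Φ hΦ x t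
    simp only [Finsupp.coe_zero, mpd_zero]
    have h1 : HasDerivAt (fun s : ℝ => (s, x)) ((1 : ℝ), (0 : Fin m → ℝ)) t :=
      (hasDerivAt_id t).prodMk (hasDerivAt_const t x)
    exact (hΦ.differentiable (by simp) (t, x)).hasFDerivAt.comp_hasDerivAt t h1
  | step k j ih =>
    have slice : ∀ {Ψ : ℝ × (Fin m → ℝ) → ℝ}, ContDiff ℝ (⊤ : ℕ∞) Ψ → ∀ t : ℝ,
        ContDiff ℝ (⊤ : ℕ∞) (fun y => Ψ (t, y)) :=
      fun hΨ t => hΨ.comp (contDiff_const.prodMk contDiff_id)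
    have pdslice : ∀ {Ψ : ℝ × (Fin m → ℝ) → ℝ}, ContDiff ℝ (⊤ : ℕ∞) Ψ → ∀ t : ℝ,
        pd j (fun y => Ψ (t, y)) = fun y => fderiv ℝ Ψ (t, y) (0, Pi.single j 1) := by
      intro Ψ hΨ t
      funext y
      have h1 : HasFDerivAt (fun y : Fin m → ℝ => (t, y))
          ((0 : (Fin m → ℝ) →L[ℝ] ℝ).prod (ContinuousLinearMap.id ℝ (Fin m → ℝ))) y :=
        (hasFDerivAt_const t y).prodMk (hasFDerivAt_id y)
      have h2 := ((hΨ.differentiable (by simp) (t, y)).hasFDerivAt.comp y h1).fderiv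
      simp only [pd]
      change fderiv ℝ (Ψ ∘ fun y => (t, y)) y _ = _
      rw [h2]
      simp
    intro Φ hΦ x t
    have h := ih (dirDeriv_contDiff hΦ (0, Pi.single j 1)) x t
    rw [mpd_add_single k j (slice (dirDeriv_contDiff hΦ (1, 0)) t),
      pdslice (dirDeriv_contDiff hΦ (1, 0)) t]
    simp only [fun t => mpd_add_single k j (slice hΦ t), pdslice hΦ]
    simpa only [dirDeriv_comm hΦ (0, Pi.single j 1)] using h

end Calculus

/-! ### Formal Taylor series -/

section Jets

variable {m : ℕ}

/-- The multi-index factorial `k! = ∏ j, (k j)!`, as a real number. -/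
def mfact (k : Fin m →₀ ℕ) : ℝ := ∏ j, (Nat.factorial (k j) : ℝ)

theorem mfact_pos (k : Fin m →₀ ℕ) : 0 < mfact k :=
  Finset.prod_pos fun _ _ => by positivity

theorem mfact_add_single (k : Fin m →₀ ℕ) (j : Fin m) :
    mfact (k + Finsupp.single j 1) = mfact k * (k j + 1) := by
  have h : ∀ i, (Nat.factorial ((k + Finsupp.single j 1 : Fin m →₀ ℕ) i) : ℝ) =
      (Nat.factorial (k i) : ℝ) * if i = j then (k j + 1 : ℝ) else 1 := by
    intro i
    by_cases hij : i = j
    · subst hij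
      simp [Nat.factorial_succ, mul_comm]
    · simp [hij]
  simp only [mfact, h, Finset.prod_mul_distrib]
  simp

/-- The formal Taylor series `∑ ∂^kφ(x)/k! X^k` of `φ` at `x`. -/
def jet (x : Fin m → ℝ) (φ : (Fin m → ℝ) → ℝ) : MvPowerSeries (Fin m) ℝ :=
  fun k => mpd k φ x / mfact k

theorem coeff_jet (x : Fin m → ℝ) (φ : (Fin m → ℝ) → ℝ) (k : Fin m →₀ ℕ) :
    coeff k (jet x φ) = mpd k φ x / mfact k := rfl

theorem coeff_zero_jet (x : Fin m → ℝ) (φ : (Fin m → ℝ) → ℝ) :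
    constantCoeff (jet x φ) = φ x := by
  rw [← coeff_zero_eq_constantCoeff_apply, coeff_jet, Finsupp.coe_zero, mpd_zero]
  simp [mfact]

theorem pderiv_jet (x : Fin m → ℝ) {φ : (Fin m → ℝ) → ℝ} (hφ : ContDiff ℝ (⊤ : ℕ∞) φ)
    (j : Fin m) : pderiv ℝ j (jet x φ) = jet x (pd j φ) := by
  ext k
  rw [coeff_pderiv, coeff_jet, coeff_jet, mpd_add_single k j hφ, mfact_add_single]
  have := (mfact_pos k).ne'
  have h2 : (k j + 1 : ℝ) ≠ 0 := by positivity
  field_simp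

/-- The nonconstant coefficients of a power series are determined by its partial derivatives. -/
theorem coeff_add_single_eq_of_pderiv {U V : MvPowerSeries (Fin m) ℝ} {k : Fin m →₀ ℕ}
    {j : Fin m} (h : coeff k (pderiv ℝ j U) = coeff k (pderiv ℝ j V)) :
    coeff (k + Finsupp.single j 1) U = coeff (k + Finsupp.single j 1) V := by
  rw [coeff_pderiv, coeff_pderiv] at h
  have h2 : (k j + 1 : ℝ) ≠ 0 := by positivity
  exact mul_right_cancel₀ h2 h

theorem jet_add (x : Fin m → ℝ) {φ ψ : (Fin m → ℝ) → ℝ} (hφ : ContDiff ℝ (⊤ : ℕ∞) φ)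
    (hψ : ContDiff ℝ (⊤ : ℕ∞) ψ) : jet x (fun y => φ y + ψ y) = jet x φ + jet x ψ := by
  ext k
  rw [map_add, coeff_jet, coeff_jet, coeff_jet, mpd_add k hφ hψ, add_div]

/-- The Leibniz rule. -/
theorem jet_mul (x : Fin m → ℝ) {φ ψ : (Fin m → ℝ) → ℝ} (hφ : ContDiff ℝ (⊤ : ℕ∞) φ)
    (hψ : ContDiff ℝ (⊤ : ℕ∞) ψ) : jet x (fun y => φ y * ψ y) = jet x φ * jet x ψ := by
  ext k
  induction k using multiIndex_induction generalizing φ ψ with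
  | zero => simp [coeff_zero_eq_constantCoeff_apply, coeff_zero_jet]
  | step k j ih =>
    apply coeff_add_single_eq_of_pderiv
    rw [pderiv_jet x (hφ.mul hψ), pd_mul hφ hψ,
      jet_add x (hφ.mul (pd_contDiff hψ j)) ((pd_contDiff hφ j).mul hψ), map_add,
      ih hφ (pd_contDiff hψ j), ih (pd_contDiff hφ j) hψ, ← map_add, Derivation.leibniz,
      pderiv_jet x hφ, pderiv_jet x hψ]
    simp [mul_comm]

/-- The composition of the Taylor polynomial of degree `N` of `f` at `g x` with the Taylor series
of `g` at `x`. -/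
def compJet (N : ℕ) (f : ℝ → ℝ) (x : Fin m → ℝ) (g : (Fin m → ℝ) → ℝ) :
    MvPowerSeries (Fin m) ℝ :=
  ∑ n ∈ range (N + 1), C (iteratedDeriv n f (g x) / n.factorial) * (jet x g - C (g x)) ^ n

theorem constantCoeff_compJet (N : ℕ) (f : ℝ → ℝ) (x : Fin m → ℝ) (g : (Fin m → ℝ) → ℝ) :
    constantCoeff (compJet N f x g) = f (g x) := by
  simp [compJet, coeff_zero_jet, Finset.sum_range_succ']

theorem pderiv_compJet (N : ℕ) (f : ℝ → ℝ) (x : Fin m → ℝ) {g : (Fin m → ℝ) → ℝ}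
    (hg : ContDiff ℝ (⊤ : ℕ∞) g) (j : Fin m) :
    pderiv ℝ j (compJet (N + 1) f x g) = compJet N (deriv f) x g * jet x (pd j g) := by
  unfold compJet
  rw [map_sum, Finset.sum_range_succ', Finset.sum_mul]
  simp only [Derivation.leibniz, Derivation.leibniz_pow, pderiv_C, map_sub, pderiv_jet x hg]
  simp only [smul_zero, add_zero, sub_zero, pow_zero, Nat.zero_sub, zero_smul]
  refine Finset.sum_congr rfl fun n _ => ?_
  rw [iteratedDeriv_succ']
  have h : (C (iteratedDeriv n (deriv f) (g x) / (n + 1).factorial) *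
      ((n + 1 : ℕ) : MvPowerSeries (Fin m) ℝ)) =
      C (iteratedDeriv n (deriv f) (g x) / n.factorial) := by
    rw [← map_natCast (C (σ := Fin m) (R := ℝ)), ← map_mul]
    congr 1
    rw [Nat.factorial_succ]
    push_cast
    field_simp
  rw [← h]
  simp only [smul_eq_mul, nsmul_eq_mul, Nat.add_sub_cancel]
  ring

theorem eq_zero_or_exists_add_single (k : Fin m →₀ ℕ) :
    k = 0 ∨ ∃ (k' : Fin m →₀ ℕ) (j : Fin m), k = k' + Finsupp.single j 1 := by
  induction k using multiIndex_induction with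
  | zero => exact Or.inl rfl
  | step k j _ => exact Or.inr ⟨k, j, rfl⟩

/-- Faà di Bruno's formula, in the form: Taylor series compose. For coefficients of degree at most
`N`, the Taylor polynomial of degree `N` of the outer function suffices. -/
theorem coeff_jet_comp (x : Fin m → ℝ) {g : (Fin m → ℝ) → ℝ} (hg : ContDiff ℝ (⊤ : ℕ∞) g)
    (N : ℕ) : ∀ (k : Fin m →₀ ℕ), k.degree ≤ N → ∀ {f : ℝ → ℝ}, ContDiff ℝ (⊤ : ℕ∞) f →
    coeff k (jet x (fun y => f (g y))) = coeff k (compJet N f x g) := by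
  have zero_case : ∀ (N : ℕ) (f : ℝ → ℝ),
      coeff 0 (jet x (fun y => f (g y))) = coeff 0 (compJet N f x g) := by
    intro N f
    rw [coeff_zero_eq_constantCoeff_apply, coeff_zero_eq_constantCoeff_apply,
      constantCoeff_compJet, coeff_zero_jet]
  induction N with
  | zero =>
    intro k hk f _
    obtain rfl := (Finsupp.degree_eq_zero_iff k).1 (Nat.le_zero.1 hk)
    exact zero_case _ _
  | succ N ih =>
    intro k hk f hf
    rcases eq_zero_or_exists_add_single k with rfl | ⟨k', j, rfl⟩
    · exact zero_case _ _
    · have hk' : k'.degree ≤ N := by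
        rw [map_add, Finsupp.degree_single] at hk; omega
      have hf' : ContDiff ℝ (⊤ : ℕ∞) (deriv f) := (contDiff_infty_iff_deriv.1 hf).2
      apply coeff_add_single_eq_of_pderiv
      have hfg : ContDiff ℝ (⊤ : ℕ∞) fun y => f (g y) := hf.comp hg
      have hfg' : ContDiff ℝ (⊤ : ℕ∞) fun y => deriv f (g y) := hf'.comp hg
      rw [pderiv_jet x hfg, pd_comp hf hg, jet_mul x hfg' (pd_contDiff hg j),
        pderiv_compJet N f x hg, coeff_mul, coeff_mul]
      refine Finset.sum_congr rfl fun p hp => ?_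
      rw [ih p.1 _ hf']
      have : p.1.degree + p.2.degree = k'.degree := by
        rw [← map_add, mem_antidiagonal.1 hp]
      omega

end Jets

/-! ### A multinomial inequality -/

section Combinatorics

theorem succ_mul_factorial_mul_factorial_le (a b : ℕ) (hb : b ≠ 0) :
    (a + 1) * (a.factorial * b.factorial) ≤ (a + b).factorial := by
  rw [← Nat.add_choose_mul_factorial_mul_factorial, mul_assoc]
  gcongr
  calc a + 1 = (a + 1).choose a := by simp
    _ ≤ (a + b).choose a := Nat.choose_le_choose a (by omega)
    _ = (a + b).choose b := Nat.choose_symm_add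

/-- `n! ∏ l_i! ≤ m^n (∑ l_i)!` for `n` nonzero multi-indices in `m` coordinates. By induction:
remove an index `l_i` with `l_i j ≠ 0`, where `j` is a coordinate in which at least `n / m` of the
indices are nonzero; the binomial coefficient in coordinate `j` is then at least `n / m`. -/
theorem factorial_mul_prod_factorial_le {ι : Type*} [DecidableEq ι] {m : ℕ} (l : ι → Fin m → ℕ)
    (n : ℕ) : ∀ s : Finset ι, s.card = n → (∀ i ∈ s, l i ≠ 0) →
    n.factorial * ∏ i ∈ s, ∏ j, (l i j).factorial ≤
      m ^ n * ∏ j, (∑ i ∈ s, l i j).factorial := by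
  induction n with
  | zero => intro s hs _; simp [Finset.card_eq_zero.1 hs]
  | succ n ih =>
    intro s hs hl
    -- Some coordinate `j` is used by at least `(n + 1) / m` of the indices in `s`.
    have hcount : n + 1 ≤ ∑ j : Fin m, (s.filter fun i => l i j ≠ 0).card := by
      simp only [Finset.card_filter]
      rw [Finset.sum_comm, ← hs, Finset.card_eq_sum_ones]
      refine Finset.sum_le_sum fun i hi => ?_
      obtain ⟨j, hj⟩ := Function.ne_iff.1 (hl i hi)
      calc 1 = if l i j ≠ 0 then 1 else 0 := (if_pos hj).symm
        _ ≤ _ := Finset.single_le_sum (f := fun j => if l i j ≠ 0 then 1 else 0)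
          (fun _ _ => Nat.zero_le _) (Finset.mem_univ j)
    obtain ⟨j, hj⟩ : ∃ j : Fin m, n + 1 ≤ m * (s.filter fun i => l i j ≠ 0).card := by
      by_contra! hcon
      have hm : (univ : Finset (Fin m)).Nonempty := by
        by_contra hne
        rw [Finset.not_nonempty_iff_eq_empty.1 hne] at hcount
        simp at hcount
      have h1 := Finset.sum_lt_sum_of_nonempty hm fun j _ => hcon j
      rw [← Finset.mul_sum] at h1
      simp only [sum_const, card_univ, Fintype.card_fin, smul_eq_mul] at h1
      exact absurd (Nat.mul_le_mul_left m hcount) (not_le.2 h1)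
    obtain ⟨i, hi⟩ : (s.filter fun i => l i j ≠ 0).Nonempty := by
      rw [← Finset.card_pos]
      exact Nat.pos_of_ne_zero fun h => by simp [h] at hj
    rw [Finset.mem_filter] at hi
    have hcard : (s.filter fun i => l i j ≠ 0).card ≤ (∑ i' ∈ s.erase i, l i' j) + 1 := by
      calc (s.filter fun i => l i j ≠ 0).card
          = ∑ i' ∈ s, if l i' j ≠ 0 then 1 else 0 := Finset.card_filter _ _
        _ = (∑ i' ∈ s.erase i, if l i' j ≠ 0 then 1 else 0) + 1 := by
            rw [← Finset.sum_erase_add s _ hi.1, if_pos hi.2]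
        _ ≤ _ := by
            gcongr with i'
            split_ifs <;> omega
    have hrec := ih (s.erase i) (by rw [Finset.card_erase_of_mem hi.1, hs]; rfl)
      fun i' hi' => hl i' (Finset.mem_of_mem_erase hi')
    set A : Fin m → ℕ := fun j' => ∑ i' ∈ s.erase i, l i' j' with hA
    have hsum : ∀ j', ∑ i' ∈ s, l i' j' = A j' + l i j' := fun j' =>
      (Finset.sum_erase_add s _ hi.1).symm
    have hbin : (A j + 1) * ∏ j', ((A j').factorial * (l i j').factorial) ≤
        ∏ j', (A j' + l i j').factorial := by
      rw [← Finset.mul_prod_erase univ _ (Finset.mem_univ j),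
        ← Finset.mul_prod_erase univ (fun j' => (A j' + l i j').factorial) (Finset.mem_univ j),
        ← mul_assoc]
      refine Nat.mul_le_mul (succ_mul_factorial_mul_factorial_le _ _ hi.2) ?_
      exact Finset.prod_le_prod' fun j' _ =>
        Nat.le_of_dvd (Nat.factorial_pos _) (Nat.factorial_mul_factorial_dvd_factorial_add _ _)
    simp only [hsum]
    rw [← Finset.prod_erase_mul s _ hi.1, Nat.factorial_succ]
    rw [Finset.prod_mul_distrib] at hbin
    calc (n + 1) * n.factorial *
          ((∏ i' ∈ s.erase i, ∏ j, (l i' j).factorial) * ∏ j, (l i j).factorial)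
        = (n + 1) * ((n.factorial * ∏ i' ∈ s.erase i, ∏ j, (l i' j).factorial) *
            ∏ j, (l i j).factorial) := by ring
      _ ≤ (m * (A j + 1)) * ((m ^ n * ∏ j', (A j').factorial) * ∏ j, (l i j).factorial) := by
          gcongr
          exact hj.trans (Nat.mul_le_mul_left m hcard)
      _ = m ^ (n + 1) * ((A j + 1) *
            ((∏ j', (A j').factorial) * ∏ j, (l i j).factorial)) := by ring
      _ ≤ _ := by gcongr

end Combinatorics

/-! ### Product and composition estimates for the Gevrey norm -/

section Norms

variable {m : ℕ}

/-- The weight `(𝑳^k / k!)^α · k!` by which the `k`-th Taylor coefficient enters the Gevrey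
norm. -/
def jetWeight (α : ℝ) (Lv : Fin m → ℝ) (k : Fin m →₀ ℕ) : ℝ :=
  ((∏ j, Lv j ^ k j) / ∏ j, (Nat.factorial (k j) : ℝ)) ^ α * mfact k

variable {α : ℝ} {Lv : Fin m → ℝ}

theorem jetWeight_pos (hLv : ∀ i, 0 < Lv i) (k : Fin m →₀ ℕ) : 0 < jetWeight α Lv k := by
  have h1 : 0 < ∏ j, Lv j ^ k j := Finset.prod_pos fun j _ => pow_pos (hLv j) _
  have h2 := mfact_pos k
  unfold jetWeight
  unfold mfact at *
  positivity

theorem jetWeight_eq (hLv : ∀ i, 0 < Lv i) (k : Fin m →₀ ℕ) :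
    jetWeight α Lv k = (∏ j, Lv j ^ k j) ^ α * mfact k ^ (1 - α) := by
  have h1 : 0 < ∏ j, Lv j ^ k j := Finset.prod_pos fun j _ => pow_pos (hLv j) _
  have h2 := mfact_pos k
  rw [Real.rpow_sub h2, Real.rpow_one]
  unfold jetWeight
  change (_ / mfact k) ^ α * _ = _
  rw [Real.div_rpow h1.le h2.le]
  ring

theorem rpow_one_sub_le (hα : 1 < α) {X Y c : ℝ} (hY : 0 < Y) (hc : 0 < c)
    (h : Y ≤ c * X) : X ^ (1 - α) ≤ c ^ (α - 1) * Y ^ (1 - α) := by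
  have h1 : Y / c ≤ X := by rwa [div_le_iff₀' hc]
  calc X ^ (1 - α) ≤ (Y / c) ^ (1 - α) :=
        Real.rpow_le_rpow_of_nonpos (by positivity) h1 (by linarith)
    _ = c ^ (α - 1) * Y ^ (1 - α) := by
        rw [Real.div_rpow hY.le hc.le, div_eq_mul_inv, ← Real.rpow_neg hc.le, neg_sub, mul_comm]

theorem jetWeight_add_le (hα : 1 < α) (hLv : ∀ i, 0 < Lv i) (a b : Fin m →₀ ℕ) :
    jetWeight α Lv (a + b) ≤ jetWeight α Lv a * jetWeight α Lv b := by
  have h1 : ∀ k : Fin m →₀ ℕ, 0 < ∏ j, Lv j ^ k j :=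
    fun k => Finset.prod_pos fun j _ => pow_pos (hLv j) _
  have ha := mfact_pos a
  have hb := mfact_pos b
  have hf : mfact a * mfact b ≤ 1 * mfact (a + b) := by
    rw [one_mul]
    simp only [mfact, ← Finset.prod_mul_distrib]
    refine Finset.prod_le_prod (fun _ _ => by positivity) fun j _ => ?_
    exact_mod_cast Nat.le_of_dvd (Nat.factorial_pos _)
      (Nat.factorial_mul_factorial_dvd_factorial_add _ _)
  have := rpow_one_sub_le hα (mul_pos ha hb) one_pos hf
  rw [Real.one_rpow, one_mul, Real.mul_rpow ha.le hb.le] at this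
  rw [jetWeight_eq hLv, jetWeight_eq hLv, jetWeight_eq hLv]
  have hP : (∏ j, Lv j ^ (a + b) j) = (∏ j, Lv j ^ a j) * ∏ j, Lv j ^ b j := by
    simp [pow_add, Finset.prod_mul_distrib]
  rw [hP, Real.mul_rpow (h1 a).le (h1 b).le]
  have h2 := Real.rpow_pos_of_pos (h1 a) α
  have h3 := Real.rpow_pos_of_pos (h1 b) α
  calc _ ≤ (∏ j, Lv j ^ a j) ^ α * (∏ j, Lv j ^ b j) ^ α *
        (mfact a ^ (1 - α) * mfact b ^ (1 - α)) := by gcongr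
    _ = _ := by ring

/-- The weights are submultiplicative, with a gain when no index vanishes. -/
theorem jetWeight_sum_le (hm : 1 ≤ m) (hα : 1 < α) (hLv : ∀ i, 0 < Lv i) (n : ℕ)
    (l : ℕ → Fin m →₀ ℕ) (hl : ∀ i ∈ range n, l i ≠ 0) :
    jetWeight α Lv (∑ i ∈ range n, l i) ≤
      ((m : ℝ) ^ n / n.factorial) ^ (α - 1) * ∏ i ∈ range n, jetWeight α Lv (l i) := by
  have h1 : ∀ k : Fin m →₀ ℕ, 0 < ∏ j, Lv j ^ k j :=
    fun k => Finset.prod_pos fun j _ => pow_pos (hLv j) _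
  have hm' : (0 : ℝ) < m := by exact_mod_cast hm
  have hn : (0 : ℝ) < n.factorial := by positivity
  have hf : ∏ i ∈ range n, mfact (l i) ≤
      ((m : ℝ) ^ n / n.factorial) * mfact (∑ i ∈ range n, l i) := by
    rw [div_mul_eq_mul_div, le_div_iff₀' hn]
    have := factorial_mul_prod_factorial_le (fun i => ⇑(l i)) n (range n) (card_range n)
      (fun i hi h => hl i hi (DFunLike.coe_injective h))
    simp only [mfact, Finsupp.finsetSum_apply]
    exact_mod_cast this
  have key := rpow_one_sub_le hα (Finset.prod_pos fun i _ => mfact_pos (l i))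
    (by positivity) hf
  rw [← Real.finsetProd_rpow _ _ fun i _ => (mfact_pos (l i)).le] at key
  have hP : (∏ j, Lv j ^ (∑ i ∈ range n, l i) j) = ∏ i ∈ range n, ∏ j, Lv j ^ l i j := by
    rw [Finset.prod_comm]
    simp [Finset.prod_pow_eq_pow_sum]
  rw [jetWeight_eq hLv, hP, ← Real.finsetProd_rpow _ _ fun i _ => (h1 (l i)).le]
  simp only [jetWeight_eq hLv, Finset.prod_mul_distrib]
  have h2 : 0 < ∏ i ∈ range n, (∏ j, Lv j ^ l i j) ^ α :=
    Finset.prod_pos fun i _ => Real.rpow_pos_of_pos (h1 _) _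
  calc _ ≤ (∏ i ∈ range n, (∏ j, Lv j ^ l i j) ^ α) *
        (((m : ℝ) ^ n / n.factorial) ^ (α - 1) * ∏ i ∈ range n, mfact (l i) ^ (1 - α)) := by
        gcongr
    _ = _ := by ring

/-- The power series whose coefficients are the terms of the Gevrey norm of `φ`. -/
def gevreySeries (α : ℝ) (Lv : Fin m → ℝ) (K : Set (Fin m → ℝ)) (φ : (Fin m → ℝ) → ℝ) :
    MvPowerSeries (Fin m) ℝ :=
  fun k => gevreyTerm α Lv K φ k

variable {K : Set (Fin m → ℝ)}

theorem coeff_gevreySeries (φ : (Fin m → ℝ) → ℝ) (k : Fin m →₀ ℕ) :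
    coeff k (gevreySeries α Lv K φ) = gevreyTerm α Lv K φ k := rfl

theorem jetWeight_mul_jet (x : Fin m → ℝ) (φ : (Fin m → ℝ) → ℝ) (k : Fin m →₀ ℕ) :
    jetWeight α Lv k * |coeff k (jet x φ)| =
      ((∏ j, Lv j ^ k j) / ∏ j, (Nat.factorial (k j) : ℝ)) ^ α * |mpd k φ x| := by
  have h := mfact_pos k
  rw [coeff_jet, abs_div, abs_of_pos h, jetWeight, mul_assoc, mul_div_cancel₀ _ h.ne']

/-- By compactness, the supremum in a term of the Gevrey norm is attained. -/
theorem exists_gevreyTerm_eq (hK : IsCompact K) (hKne : K.Nonempty)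
    {φ : (Fin m → ℝ) → ℝ} (hφ : ContDiff ℝ (⊤ : ℕ∞) φ) (k : Fin m →₀ ℕ) :
    ∃ x ∈ K, gevreyTerm α Lv K φ k = jetWeight α Lv k * |coeff k (jet x φ)| := by
  obtain ⟨x, hx, h⟩ := hK.exists_sSup_image_eq hKne
    (mpd_contDiff k hφ).continuous.norm.continuousOn
  refine ⟨x, hx, ?_⟩
  rw [jetWeight_mul_jet]
  unfold gevreyTerm supOn
  rw [h, Real.norm_eq_abs]

theorem jetWeight_mul_jet_le (hLv : ∀ i, 0 < Lv i) (hK : IsCompact K)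
    {φ : (Fin m → ℝ) → ℝ} (hφ : ContDiff ℝ (⊤ : ℕ∞) φ) (k : Fin m →₀ ℕ)
    {x : Fin m → ℝ} (hx : x ∈ K) :
    jetWeight α Lv k * |coeff k (jet x φ)| ≤ coeff k (gevreySeries α Lv K φ) := by
  rw [jetWeight_mul_jet, coeff_gevreySeries, gevreyTerm]
  have h1 : 0 < ∏ j, Lv j ^ k j := Finset.prod_pos fun j _ => pow_pos (hLv j) _
  gcongr
  exact le_csSup (hK.image (mpd_contDiff k hφ).continuous.norm).bddAbove ⟨x, hx, rfl⟩

theorem gevreySeries_nonneg (hLv : ∀ i, 0 < Lv i) (φ : (Fin m → ℝ) → ℝ) (k : Fin m →₀ ℕ) :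
    0 ≤ coeff k (gevreySeries α Lv K φ) := by
  have h1 : 0 < ∏ j, Lv j ^ k j := Finset.prod_pos fun j _ => pow_pos (hLv j) _
  rw [coeff_gevreySeries, gevreyTerm]
  refine mul_nonneg (by positivity) (Real.sSup_nonneg ?_)
  rintro _ ⟨x, _, rfl⟩
  exact norm_nonneg _

theorem coeff_mul_nonneg {U V : MvPowerSeries (Fin m) ℝ} (hU : ∀ k, 0 ≤ coeff k U)
    (hV : ∀ k, 0 ≤ coeff k V) (k : Fin m →₀ ℕ) : 0 ≤ coeff k (U * V) := by
  rw [coeff_mul]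
  exact Finset.sum_nonneg fun p _ => mul_nonneg (hU _) (hV _)

theorem coeff_pow_nonneg {U : MvPowerSeries (Fin m) ℝ} (hU : ∀ k, 0 ≤ coeff k U) (n : ℕ)
    (k : Fin m →₀ ℕ) : 0 ≤ coeff k (U ^ n) := by
  rw [coeff_pow]
  exact Finset.sum_nonneg fun p _ => Finset.prod_nonneg fun i _ => hU _

theorem hasSum_coeff_mul {U V : MvPowerSeries (Fin m) ℝ} {u v : ℝ} (hU : ∀ k, 0 ≤ coeff k U)
    (hV : ∀ k, 0 ≤ coeff k V) (hu : HasSum (fun k => coeff k U) u)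
    (hv : HasSum (fun k => coeff k V) v) : HasSum (fun k => coeff k (U * V)) (u * v) := by
  have h := hu.summable.mul_of_nonneg hv.summable hU hV
  have h1 := summable_sum_mul_antidiagonal_of_summable_mul h
  have h2 := hu.summable.tsum_mul_tsum_eq_tsum_sum_antidiagonal hv.summable h
  rw [hu.tsum_eq, hv.tsum_eq] at h2
  rw [h2]
  simp only [coeff_mul]
  exact h1.hasSum

theorem hasSum_coeff_pow {U : MvPowerSeries (Fin m) ℝ} {u : ℝ} (hU : ∀ k, 0 ≤ coeff k U)
    (hu : HasSum (fun k => coeff k U) u) (n : ℕ) :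
    HasSum (fun k => coeff k (U ^ n)) (u ^ n) := by
  classical
  induction n with
  | zero =>
    simp only [pow_zero, coeff_one]
    exact hasSum_ite_eq 0 1
  | succ n ih =>
    rw [pow_succ, pow_succ]
    exact hasSum_coeff_mul (coeff_pow_nonneg hU n) hU ih hu

/-- The Gevrey norm of a product is termwise dominated by the Cauchy product. -/
theorem gevreyTerm_mul_le (hα : 1 < α) (hLv : ∀ i, 0 < Lv i) (hK : IsCompact K)
    (hKne : K.Nonempty) {φ ψ : (Fin m → ℝ) → ℝ} (hφ : ContDiff ℝ (⊤ : ℕ∞) φ)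
    (hψ : ContDiff ℝ (⊤ : ℕ∞) ψ) (k : Fin m →₀ ℕ) :
    gevreyTerm α Lv K (fun x => φ x * ψ x) k ≤
      coeff k (gevreySeries α Lv K φ * gevreySeries α Lv K ψ) := by
  obtain ⟨x, hx, h⟩ := exists_gevreyTerm_eq (α := α) (Lv := Lv) hK hKne (hφ.mul hψ) k
  rw [h, jet_mul x hφ hψ, coeff_mul, coeff_mul]
  have hk := jetWeight_pos (α := α) hLv k
  calc jetWeight α Lv k * |∑ p ∈ antidiagonal k, coeff p.1 (jet x φ) * coeff p.2 (jet x ψ)|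
      ≤ jetWeight α Lv k *
        ∑ p ∈ antidiagonal k, |coeff p.1 (jet x φ) * coeff p.2 (jet x ψ)| := by
        gcongr; exact Finset.abs_sum_le_sum_abs _ _
    _ = ∑ p ∈ antidiagonal k,
        jetWeight α Lv k * (|coeff p.1 (jet x φ)| * |coeff p.2 (jet x ψ)|) := by
        simp only [Finset.mul_sum, abs_mul]
    _ ≤ _ := by
        refine Finset.sum_le_sum fun p hp => ?_
        rw [← mem_antidiagonal.1 hp]
        calc _ ≤ jetWeight α Lv p.1 * jetWeight α Lv p.2 *
              (|coeff p.1 (jet x φ)| * |coeff p.2 (jet x ψ)|) := by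
              gcongr; exact jetWeight_add_le hα hLv _ _
          _ = (jetWeight α Lv p.1 * |coeff p.1 (jet x φ)|) *
              (jetWeight α Lv p.2 * |coeff p.2 (jet x ψ)|) := by ring
          _ ≤ _ := mul_le_mul (jetWeight_mul_jet_le hLv hK hφ _ hx)
              (jetWeight_mul_jet_le hLv hK hψ _ hx)
              (mul_nonneg (jetWeight_pos hLv _).le (abs_nonneg _))
              (gevreySeries_nonneg hLv _ _)

/-- Powers of a Taylor series without constant term. The index tuples in the expansion of the
power have no zero entry, which gains the factor `(m ^ n / n!) ^ (α - 1)`. -/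
theorem jetWeight_mul_pow_le (hm : 1 ≤ m) (hα : 1 < α) (hLv : ∀ i, 0 < Lv i)
    (hK : IsCompact K) {g : (Fin m → ℝ) → ℝ} (hg : ContDiff ℝ (⊤ : ℕ∞) g) (n : ℕ)
    (k : Fin m →₀ ℕ) {x : Fin m → ℝ} (hx : x ∈ K) :
    jetWeight α Lv k * |coeff k ((jet x g - C (g x)) ^ n)| ≤
      ((m : ℝ) ^ n / n.factorial) ^ (α - 1) * coeff k (gevreySeries α Lv K g ^ n) := by
  classical
  have hk := jetWeight_pos (α := α) hLv k
  have hc : 0 ≤ ((m : ℝ) ^ n / n.factorial) ^ (α - 1) := by positivity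
  rw [coeff_pow, coeff_pow, Finset.mul_sum]
  refine (mul_le_mul_of_nonneg_left (Finset.abs_sum_le_sum_abs _ _) hk.le).trans ?_
  rw [Finset.mul_sum]
  refine Finset.sum_le_sum fun l hl => ?_
  rw [Finset.abs_prod]
  by_cases hz : ∃ i ∈ range n, l i = 0
  · obtain ⟨i, hi, hi0⟩ := hz
    rw [Finset.prod_eq_zero hi, mul_zero]
    · exact mul_nonneg hc (Finset.prod_nonneg fun i _ => gevreySeries_nonneg hLv _ _)
    · simp [hi0, coeff_zero_eq_constantCoeff_apply, coeff_zero_jet]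
  · push Not at hz
    have hsum : ∑ i ∈ range n, l i = k := (mem_finsuppAntidiag.1 hl).1
    have hw := jetWeight_sum_le hm hα hLv n l hz
    rw [hsum] at hw
    calc _ ≤ (((m : ℝ) ^ n / n.factorial) ^ (α - 1) * ∏ i ∈ range n, jetWeight α Lv (l i)) *
          ∏ i ∈ range n, |coeff (l i) (jet x g - C (g x))| := by gcongr
      _ = ((m : ℝ) ^ n / n.factorial) ^ (α - 1) *
          ∏ i ∈ range n, (jetWeight α Lv (l i) * |coeff (l i) (jet x g - C (g x))|) := by
          rw [Finset.prod_mul_distrib, mul_assoc]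
      _ ≤ _ := by
          gcongr with i hi
          · intro i _
            exact mul_nonneg (jetWeight_pos hLv _).le (abs_nonneg _)
          · rw [map_sub, coeff_C, if_neg (hz i hi), sub_zero]
            exact jetWeight_mul_jet_le hLv hK hg _ hx

theorem iteratedDeriv_abs_le {f : ℝ → ℝ} (hf : ContDiff ℝ (⊤ : ℕ∞) f) (n : ℕ) {y : ℝ}
    (hy : y ∈ Set.Icc (-1 : ℝ) 1) : |iteratedDeriv n f y| ≤
      sSup ((fun t => |iteratedDeriv n f t|) '' Set.Icc (-1 : ℝ) 1) := by
  have hc : Continuous (iteratedDeriv n f) :=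
    hf.continuous_iteratedDeriv n (by exact_mod_cast le_top)
  exact le_csSup (isCompact_Icc.image hc.abs).bddAbove ⟨y, hy, rfl⟩

/-- Termwise bound for the Gevrey norm of a composition. -/
theorem gevreyTerm_comp_le (hm : 1 ≤ m) (hα : 1 < α) (hLv : ∀ i, 0 < Lv i)
    (hK : IsCompact K) (hKne : K.Nonempty) {f : ℝ → ℝ} (hf : ContDiff ℝ (⊤ : ℕ∞) f)
    {g : (Fin m → ℝ) → ℝ} (hg : ContDiff ℝ (⊤ : ℕ∞) g)
    (hrange : ∀ x ∈ K, g x ∈ Set.Icc (-1 : ℝ) 1) {N : ℕ} {k : Fin m →₀ ℕ}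
    (hk : k.degree ≤ N) :
    gevreyTerm α Lv K (fun x => f (g x)) k ≤ ∑ n ∈ range (N + 1),
      sSup ((fun t => |iteratedDeriv n f t|) '' Set.Icc (-1 : ℝ) 1) / n.factorial *
        (((m : ℝ) ^ n / n.factorial) ^ (α - 1) * coeff k (gevreySeries α Lv K g ^ n)) := by
  obtain ⟨x, hx, h⟩ := exists_gevreyTerm_eq (α := α) (Lv := Lv) hK hKne
    (φ := fun x => f (g x)) (hf.comp hg) k
  have hkp := jetWeight_pos (α := α) hLv k
  rw [h, coeff_jet_comp x hg N k hk hf, compJet, map_sum]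
  refine (mul_le_mul_of_nonneg_left (Finset.abs_sum_le_sum_abs _ _) hkp.le).trans ?_
  rw [Finset.mul_sum]
  refine Finset.sum_le_sum fun n _ => ?_
  rw [coeff_C_mul, abs_mul, abs_div, Nat.abs_cast, mul_left_comm]
  have h1 := iteratedDeriv_abs_le hf n (hrange x hx)
  have h2 := jetWeight_mul_pow_le hm hα hLv hK hg n k hx
  exact mul_le_mul (by gcongr) h2 (mul_nonneg hkp.le (abs_nonneg _))
    (div_nonneg ((abs_nonneg _).trans h1) (by positivity))

/-- The smallness condition on the norm `s` of the inner function is exactly what turns the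
coefficient of the `n`-th term of the composition into the one-variable Gevrey weight. -/
theorem gevrey1_factor {L s : ℝ} (hm : 1 ≤ m) (hL : 0 < L) (hs : 0 ≤ s)
    (hsL : s ≤ L ^ α / (m : ℝ) ^ (α - 1)) (n : ℕ) :
    1 / (n.factorial : ℝ) * (((m : ℝ) ^ n / n.factorial) ^ (α - 1) * s ^ n) ≤
      (L ^ n / (n.factorial : ℝ)) ^ α := by
  have hm' : (0 : ℝ) < m := by exact_mod_cast hm
  have hn : (0 : ℝ) < n.factorial := by positivity
  have h1 : s ^ n ≤ (L ^ n) ^ α / ((m : ℝ) ^ n) ^ (α - 1) := by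
    calc s ^ n ≤ (L ^ α / (m : ℝ) ^ (α - 1)) ^ n := by gcongr
      _ = _ := by
        rw [div_pow, ← Real.rpow_natCast (L ^ α), ← Real.rpow_natCast ((m : ℝ) ^ (α - 1)),
          ← Real.rpow_mul hL.le, ← Real.rpow_mul hm'.le, ← Real.rpow_natCast L,
          ← Real.rpow_natCast (m : ℝ) n, ← Real.rpow_mul hL.le, ← Real.rpow_mul hm'.le,
          mul_comm α, mul_comm (α - 1)]
  calc _ ≤ 1 / (n.factorial : ℝ) * (((m : ℝ) ^ n / n.factorial) ^ (α - 1) *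
        ((L ^ n) ^ α / ((m : ℝ) ^ n) ^ (α - 1))) := by gcongr
    _ = (L ^ n) ^ α / (n.factorial * (n.factorial : ℝ) ^ (α - 1)) := by
        rw [Real.div_rpow (by positivity) hn.le]
        have : ((m : ℝ) ^ n) ^ (α - 1) ≠ 0 := by positivity
        field_simp
    _ = _ := by
        rw [Real.div_rpow (by positivity) hn.le]
        congr 1
        rw [Real.rpow_sub hn, Real.rpow_one]
        field_simp

/-- Composition estimate: `‖f ∘ g‖_{α,𝑳} ≤ ‖f‖_{α,L}` if `g` maps `K` to `[-1,1]` and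
`‖g‖_{α,𝑳} ≤ L^α / m^(α-1)`. -/
theorem sum_gevreyTerm_comp_le (hm : 1 ≤ m) (hα : 1 < α) (hLv : ∀ i, 0 < Lv i)
    (hK : IsCompact K) (hKne : K.Nonempty) {L : ℝ} (hL : 0 < L)
    {f : ℝ → ℝ} (hf : ContDiff ℝ (⊤ : ℕ∞) f) (hfsum : Summable (gevrey1Term α L f))
    {g : (Fin m → ℝ) → ℝ} (hg : ContDiff ℝ (⊤ : ℕ∞) g)
    (hrange : ∀ x ∈ K, g x ∈ Set.Icc (-1 : ℝ) 1) {s : ℝ}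
    (hs : HasSum (fun k => coeff k (gevreySeries α Lv K g)) s)
    (hsL : s ≤ L ^ α / (m : ℝ) ^ (α - 1)) (S : Finset (Fin m →₀ ℕ)) :
    ∑ k ∈ S, gevreyTerm α Lv K (fun x => f (g x)) k ≤ ∑' n, gevrey1Term α L f n := by
  have hnn := gevreySeries_nonneg (α := α) (K := K) hLv g
  have hs0 : 0 ≤ s := hs.nonneg hnn
  have hM : ∀ n, 0 ≤ sSup ((fun t => |iteratedDeriv n f t|) '' Set.Icc (-1 : ℝ) 1) := by
    intro n
    apply Real.sSup_nonneg
    rintro _ ⟨x, _, rfl⟩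
    exact abs_nonneg _
  have hterm : ∀ n, 0 ≤ gevrey1Term α L f n := fun n => mul_nonneg (by positivity) (hM n)
  set N := S.sup Finsupp.degree with hN
  calc ∑ k ∈ S, gevreyTerm α Lv K (fun x => f (g x)) k
      ≤ ∑ k ∈ S, ∑ n ∈ range (N + 1),
      sSup ((fun t => |iteratedDeriv n f t|) '' Set.Icc (-1 : ℝ) 1) / n.factorial *
        (((m : ℝ) ^ n / n.factorial) ^ (α - 1) * coeff k (gevreySeries α Lv K g ^ n)) :=
        Finset.sum_le_sum fun k hk => gevreyTerm_comp_le hm hα hLv hK hKne hf hg hrange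
          (Finset.le_sup (f := Finsupp.degree) hk)
    _ = ∑ n ∈ range (N + 1),
      sSup ((fun t => |iteratedDeriv n f t|) '' Set.Icc (-1 : ℝ) 1) / n.factorial *
        (((m : ℝ) ^ n / n.factorial) ^ (α - 1) *
          ∑ k ∈ S, coeff k (gevreySeries α Lv K g ^ n)) := by
        rw [Finset.sum_comm]
        simp only [Finset.mul_sum]
    _ ≤ ∑ n ∈ range (N + 1), gevrey1Term α L f n := by
        refine Finset.sum_le_sum fun n _ => ?_
        have h1 : ∑ k ∈ S, coeff k (gevreySeries α Lv K g ^ n) ≤ s ^ n :=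
          sum_le_hasSum S (fun k _ => coeff_pow_nonneg hnn n k) (hasSum_coeff_pow hnn hs n)
        have h2 := hM n
        calc _ ≤ sSup ((fun t => |iteratedDeriv n f t|) '' Set.Icc (-1 : ℝ) 1) / n.factorial *
              (((m : ℝ) ^ n / n.factorial) ^ (α - 1) * s ^ n) := by gcongr
          _ = (1 / (n.factorial : ℝ) * (((m : ℝ) ^ n / n.factorial) ^ (α - 1) * s ^ n)) *
              sSup ((fun t => |iteratedDeriv n f t|) '' Set.Icc (-1 : ℝ) 1) := by ring
          _ ≤ _ := mul_le_mul_of_nonneg_right (gevrey1_factor hm hL hs0 hsL n) h2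
    _ ≤ _ := hfsum.sum_le_tsum _ fun n _ => hterm n

end Norms

/-! ### The Lipschitz estimate -/

/-- Lipschitz-type estimate for composition with a Gevrey function. -/
theorem gevrey_composition_difference {m : ℕ} (hm : 1 ≤ m)
    {α L : ℝ} (hα : 1 < α) (hL : 0 < L)
    (F : ℝ → ℝ) (hFs : ContDiff ℝ (⊤ : ℕ∞) F)
    (hF' : Summable (gevrey1Term α L (deriv F)))
    (a b : Fin m → ℝ) (hab : ∀ i, a i ≤ b i)
    (K : Set (Fin m → ℝ)) (hKdef : K = Set.pi Set.univ fun i => Set.Icc (a i) (b i))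
    (Lv : Fin m → ℝ) (hLv : ∀ i, 0 < Lv i)
    (q Δq : (Fin m → ℝ) → ℝ) (hq : ContDiff ℝ (⊤ : ℕ∞) q) (hΔq : ContDiff ℝ (⊤ : ℕ∞) Δq)
    (hrange : ∀ t ∈ Set.Icc (0 : ℝ) 1, ∀ x ∈ K, q x + t * Δq x ∈ Set.Icc (-1 : ℝ) 1)
    (hGsum : ∀ t ∈ Set.Icc (0 : ℝ) 1,
      Summable (gevreyTerm α Lv K (fun x => q x + t * Δq x)))
    (hGsmall : ∀ t ∈ Set.Icc (0 : ℝ) 1,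
      (∑' k, gevreyTerm α Lv K (fun x => q x + t * Δq x) k) ≤
        L ^ α / (m : ℝ) ^ (α - 1)) :
    Summable (gevreyTerm α Lv K (fun x => F (q x + Δq x) - F (q x))) ∧
      ∑' k, gevreyTerm α Lv K (fun x => F (q x + Δq x) - F (q x)) k ≤
        (∑' k, gevrey1Term α L (deriv F) k) * ∑' k, gevreyTerm α Lv K Δq k := by
  have hK : IsCompact K := by
    rw [hKdef]; exact isCompact_univ_pi fun i => isCompact_Icc
  have hKne : K.Nonempty := by
    rw [hKdef]; exact ⟨a, fun i _ => ⟨le_rfl, hab i⟩⟩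
  have hF's : ContDiff ℝ (⊤ : ℕ∞) (deriv F) := (contDiff_infty_iff_deriv.1 hFs).2
  -- Multi-indices as finitely supported functions.
  let e : (Fin m →₀ ℕ) ≃ (Fin m → ℕ) := Finsupp.equivFunOnFinite
  have hsummable : ∀ φ : (Fin m → ℝ) → ℝ, Summable (gevreyTerm α Lv K φ) ↔
      Summable (fun k => coeff k (gevreySeries α Lv K φ)) :=
    fun φ => (e.summable_iff (f := gevreyTerm α Lv K φ)).symm
  have htsum : ∀ φ : (Fin m → ℝ) → ℝ, ∑' k, gevreyTerm α Lv K φ k =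
      ∑' k, coeff k (gevreySeries α Lv K φ) :=
    fun φ => (e.tsum_eq (gevreyTerm α Lv K φ)).symm
  rw [htsum, htsum, hsummable]
  have hqt : ∀ t : ℝ, ContDiff ℝ (⊤ : ℕ∞) (fun x => q x + t * Δq x) :=
    fun t => hq.add (contDiff_const.mul hΔq)
  have hnn := fun φ => gevreySeries_nonneg (α := α) (K := K) hLv φ
  -- The increment is the difference of the perturbations at `t = 1` and `t = 0`.
  have hΔsum : Summable (fun k => coeff k (gevreySeries α Lv K Δq)) := by
    have h0 := (hsummable _).1 (hGsum 0 ⟨le_rfl, zero_le_one⟩)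
    have h1 := (hsummable _).1 (hGsum 1 ⟨zero_le_one, le_rfl⟩)
    refine Summable.of_nonneg_of_le (hnn Δq) (fun k => ?_) (h1.add h0)
    obtain ⟨x, hx, h⟩ := exists_gevreyTerm_eq (α := α) (Lv := Lv) hK hKne hΔq k
    have hΔ : Δq = fun x => (q x + 1 * Δq x) - (q x + 0 * Δq x) := by
      funext x; ring
    have hjet : coeff k (jet x Δq) = coeff k (jet x fun x => q x + 1 * Δq x) -
        coeff k (jet x fun x => q x + 0 * Δq x) := by
      conv_lhs => rw [hΔ]
      rw [coeff_jet, mpd_sub k (hqt 1) (hqt 0), sub_div]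
      rfl
    rw [coeff_gevreySeries, h, hjet]
    have hk := jetWeight_pos (α := α) hLv k
    calc _ ≤ jetWeight α Lv k * (|coeff k (jet x fun x => q x + 1 * Δq x)| +
          |coeff k (jet x fun x => q x + 0 * Δq x)|) := by
          gcongr; exact abs_sub _ _
      _ ≤ _ := by
          rw [mul_add]
          exact add_le_add (jetWeight_mul_jet_le hLv hK (hqt 1) k hx)
            (jetWeight_mul_jet_le hLv hK (hqt 0) k hx)
  -- Gevrey bound for the `t`-derivative of `F ∘ (q + t Δq)`.
  have hderiv : ∀ t ∈ Set.Icc (0 : ℝ) 1, ∀ S : Finset (Fin m →₀ ℕ),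
      ∑ k ∈ S, gevreyTerm α Lv K (fun x => deriv F (q x + t * Δq x) * Δq x) k ≤
        (∑' k, gevrey1Term α L (deriv F) k) * ∑' k, coeff k (gevreySeries α Lv K Δq) := by
    intro t ht S
    have hs := ((hsummable _).1 (hGsum t ht)).hasSum
    have hcomp := sum_gevreyTerm_comp_le hm hα hLv hK hKne hL hF's hF' (hqt t)
      (hrange t ht) hs ((htsum _).symm.le.trans (hGsmall t ht))
    have hc : ContDiff ℝ (⊤ : ℕ∞) (fun x => deriv F (q x + t * Δq x)) := hF's.comp (hqt t)
    have hcs : Summable (fun k =>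
        coeff k (gevreySeries α Lv K (fun x => deriv F (q x + t * Δq x)))) :=
      summable_of_sum_le (hnn _) hcomp
    have hprod := hasSum_coeff_mul (hnn _) (hnn _) hcs.hasSum hΔsum.hasSum
    calc _ ≤ ∑ k ∈ S, coeff k (gevreySeries α Lv K (fun x => deriv F (q x + t * Δq x)) *
          gevreySeries α Lv K Δq) :=
          Finset.sum_le_sum fun k _ => gevreyTerm_mul_le hα hLv hK hKne hc hΔq k
      _ ≤ _ := sum_le_hasSum S (fun k _ => coeff_mul_nonneg (hnn _) (hnn _) k) hprod
      _ ≤ _ := mul_le_mul_of_nonneg_right (hcs.tsum_le_of_sum_le hcomp) (tsum_nonneg (hnn _))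
  have hh : ContDiff ℝ (⊤ : ℕ∞) (fun x => F (q x + Δq x) - F (q x)) :=
    (hFs.comp (hq.add hΔq)).sub (hFs.comp hq)
  have hmain : ∀ S : Finset (Fin m →₀ ℕ),
      ∑ k ∈ S, coeff k (gevreySeries α Lv K (fun x => F (q x + Δq x) - F (q x))) ≤
        (∑' k, gevrey1Term α L (deriv F) k) * ∑' k, coeff k (gevreySeries α Lv K Δq) := by
    intro S
    choose x hxK hx using fun k => exists_gevreyTerm_eq (α := α) (Lv := Lv) hK hKne hh k
    let Φ : ℝ × (Fin m → ℝ) → ℝ := fun p => F (q p.2 + p.1 * Δq p.2)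
    have hin : ContDiff ℝ (⊤ : ℕ∞) fun p : ℝ × (Fin m → ℝ) => q p.2 + p.1 * Δq p.2 :=
      (hq.comp contDiff_snd).add (contDiff_fst.mul (hΔq.comp contDiff_snd))
    have hΦ : ContDiff ℝ (⊤ : ℕ∞) Φ := hFs.comp hin
    have hΦ' : ∀ t y, fderiv ℝ Φ (t, y) (1, 0) = deriv F (q y + t * Δq y) * Δq y := by
      intro t y
      have h1 : HasDerivAt (fun s : ℝ => (s, y)) ((1 : ℝ), (0 : Fin m → ℝ)) t :=
        (hasDerivAt_id t).prodMk (hasDerivAt_const t y)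
      have h2 := (hΦ.differentiable (by simp) (t, y)).hasFDerivAt.comp_hasDerivAt t h1
      have h3 : HasDerivAt (fun s : ℝ => q y + s * Δq y) (Δq y) t := by
        simpa using ((hasDerivAt_id t).mul_const (Δq y)).const_add (q y)
      exact h2.unique
        ((hFs.differentiable (by simp) (q y + t * Δq y)).hasDerivAt.comp t h3)
    -- Fix the sign of `∂^k h` at a point `x k` where the supremum is attained; the signed sum is
    -- the increment over `[0,1]` of a scalar function `G`, so the mean value theorem applies.
    let c : (Fin m →₀ ℕ) → ℝ := fun k => jetWeight α Lv k / mfact k *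
      (SignType.sign (mpd k (fun x => F (q x + Δq x) - F (q x)) (x k)) : ℝ)
    let G : ℝ → ℝ := fun t => ∑ k ∈ S, c k * mpd k (fun y => Φ (t, y)) (x k)
    let G' : ℝ → ℝ := fun t => ∑ k ∈ S,
      c k * mpd k (fun y => deriv F (q y + t * Δq y) * Δq y) (x k)
    have hG : ∀ t, HasDerivAt G (G' t) t := by
      intro t
      refine HasDerivAt.fun_sum fun k _ => ?_
      have := mpd_param_hasDerivAt k hΦ (x k) t
      simp only [hΦ'] at this
      exact this.const_mul (c k)
    obtain ⟨t, ht, hslope⟩ := exists_hasDerivAt_eq_slope G G' zero_lt_one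
      (fun t _ => (hG t).continuousAt.continuousWithinAt) (fun t _ => hG t)
    have hG01 : ∑ k ∈ S, coeff k (gevreySeries α Lv K (fun x => F (q x + Δq x) - F (q x))) =
        G 1 - G 0 := by
      simp only [G, ← Finset.sum_sub_distrib, ← mul_sub]
      refine Finset.sum_congr rfl fun k _ => ?_
      have hm' : mpd k (fun x => F (q x + Δq x) - F (q x)) (x k) =
          mpd k (fun y => Φ (1, y)) (x k) - mpd k (fun y => Φ (0, y)) (x k) := by
        have := mpd_sub k (φ := fun x => F (q x + Δq x)) (ψ := fun x => F (q x))
          (hFs.comp (hq.add hΔq)) (hFs.comp hq)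
        rw [this]
        simp [Φ]
      rw [← hm', coeff_gevreySeries, hx, coeff_jet, abs_div, abs_of_pos (mfact_pos k)]
      simp only [c]
      rw [mul_assoc, sign_mul_self]
      ring
    rw [hG01]
    have hGt : G 1 - G 0 = G' t := by rw [hslope]; simp
    rw [hGt]
    refine le_trans (Finset.sum_le_sum fun k _ => ?_) (hderiv t ⟨ht.1.le, ht.2.le⟩ S)
    have hd : ContDiff ℝ (⊤ : ℕ∞) (fun y => deriv F (q y + t * Δq y) * Δq y) :=
      (hF's.comp (hqt t)).mul hΔq
    have hb := jetWeight_mul_jet_le (α := α) hLv hK hd k (hxK k)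
    rw [coeff_jet, abs_div, abs_of_pos (mfact_pos k), coeff_gevreySeries] at hb
    refine le_trans ?_ hb
    have hw : 0 < jetWeight α Lv k / mfact k := div_pos (jetWeight_pos hLv k) (mfact_pos k)
    have hsgn : ∀ u v : ℝ, (SignType.sign u : ℝ) * v ≤ |v| := by
      intro u v
      rcases lt_trichotomy u 0 with hu | hu | hu
      · simpa [sign_neg hu] using neg_le_abs v
      · simp [hu]
      · simpa [sign_pos hu] using le_abs_self v
    calc _ = jetWeight α Lv k / mfact k * ((SignType.sign _ : ℝ) * _) := mul_assoc _ _ _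
      _ ≤ jetWeight α Lv k / mfact k * |_| := mul_le_mul_of_nonneg_left (hsgn _ _) hw.le
      _ = _ := by ring
  have hS := summable_of_sum_le (hnn _) hmain
  exact ⟨hS, hS.tsum_le_of_sum_le hmain⟩
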